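/- Let X = (X_1, X_2, …) be a sequence of ℝ^d-valued random vectors with partial sums S_n := X_1 + … + X_n, let A_n be invertible d×d real matrices and b_n ∈ ℝ^d, and assume: (i) X is strongly mixing; (ii) the triangular array (A_n X_j : 1 ≤ j ≤ n, n ≥ 1) is infinitesimal; (iii) the distributions of A_n S_n + b_n converge weakly to a full probability measure μ on ℝ^d. If for each n ∈ ℕ, m_n is an integer with 1 ≤ m_n ≤ n, then every limit point (limit along a subsequence) of the sequence of matrices (A_n A_{m_n}^{−1})_{n∈ℕ} belongs to the Urbanik decomposability semigroup D(μ). -/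

import Mathlib

open MeasureTheory Filter Topology Matrix

/-- Convolution of two Borel measures on `ℝ^d`. -/
noncomputable def mconv {d : ℕ} (μ ν : Measure (Fin d → ℝ)) : Measure (Fin d → ℝ) :=
  (μ.prod ν).map (fun p => p.1 + p.2)

/-- The Urbanik decomposability semigroup `D(μ)`: all matrices `A` such that
`μ = (A_*μ) ∗ ν` for some probability measure `ν`. -/
def UrbanikD {d : ℕ} (μ : Measure (Fin d → ℝ)) : Set (Matrix (Fin d) (Fin d) ℝ) :=
  {A | ∃ ν : Measure (Fin d → ℝ), IsProbabilityMeasure ν ∧ μ = mconv (μ.map A.mulVec) ν}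

/-- A measure on `ℝ^d` is full if its support is not contained in any hyperplane,
i.e. no translate `v + L` of a proper linear subspace `L` carries all of its mass. -/
def IsFull {d : ℕ} (μ : Measure (Fin d → ℝ)) : Prop :=
  ∀ (v : Fin d → ℝ) (L : Submodule ℝ (Fin d → ℝ)), L ≠ ⊤ → μ {x | x - v ∈ L} < 1

/-- Weak convergence of a sequence of measures on `ℝ^d`. -/
def WeakLim {d : ℕ} (μs : ℕ → Measure (Fin d → ℝ)) (μ : Measure (Fin d → ℝ)) : Prop :=
  ∀ f : BoundedContinuousFunction (Fin d → ℝ) ℝ,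
    Tendsto (fun n => ∫ x, f x ∂(μs n)) atTop (𝓝 (∫ x, f x ∂μ))

/-- Partial sums `S_n = X_1 + ... + X_n`. -/
def partialSum {Ω : Type*} {d : ℕ} (X : ℕ → Ω → (Fin d → ℝ)) (n : ℕ) (ω : Ω) :
    Fin d → ℝ :=
  ∑ j ∈ Finset.Icc 1 n, X j ω

/-- The triangular array `(A_n X_j : 1 ≤ j ≤ n, n ≥ 1)` is infinitesimal:
`sup_{1 ≤ j ≤ n} P(‖A_n X_j‖ ≥ ε) → 0` as `n → ∞`, for every `ε > 0`. -/
def Infinitesimal {Ω : Type*} [MeasurableSpace Ω] {d : ℕ} (P : Measure Ω)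
    (A : ℕ → Matrix (Fin d) (Fin d) ℝ) (X : ℕ → Ω → (Fin d → ℝ)) : Prop :=
  ∀ ε > (0 : ℝ), ∀ δ > (0 : ℝ), ∃ N : ℕ, ∀ n ≥ N, ∀ j : ℕ, 1 ≤ j → j ≤ n →
    (P {ω | ε ≤ ‖(A n).mulVec (X j ω)‖}).toReal < δ

/-- Rosenblatt's measure of dependence `α(𝒜, ℬ)` between two sub-σ-fields. -/
noncomputable def alphaSig {Ω : Type*} [MeasurableSpace Ω] (P : Measure Ω)
    (m₁ m₂ : MeasurableSpace Ω) : ℝ :=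
  sSup {r | ∃ A B : Set Ω, MeasurableSet[m₁] A ∧ MeasurableSet[m₂] B ∧
    r = |(P (A ∩ B)).toReal - (P A).toReal * (P B).toReal|}

/-- The strong mixing coefficient `α(X; n) = sup_{j ≥ 1} α(σ(X_k, 1 ≤ k ≤ j), σ(X_k, k ≥ j+n))`. -/
noncomputable def alphaMix {Ω : Type*} [MeasurableSpace Ω] {d : ℕ} (P : Measure Ω)
    (X : ℕ → Ω → (Fin d → ℝ)) (n : ℕ) : ℝ :=
  ⨆ j : {j : ℕ // 1 ≤ j}, alphaSig P
    (⨆ k ∈ Set.Icc 1 (j : ℕ), MeasurableSpace.comap (X k) inferInstance)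
    (⨆ k ∈ Set.Ici ((j : ℕ) + n), MeasurableSpace.comap (X k) inferInstance)

/-- The sequence `X = (X_1, X_2, ...)` is strongly mixing: `α(X; n) → 0`. -/
def StronglyMixing {Ω : Type*} [MeasurableSpace Ω] {d : ℕ} (P : Measure Ω)
    (X : ℕ → Ω → (Fin d → ℝ)) : Prop :=
  Tendsto (alphaMix P X) atTop (𝓝 0)

/-!
Put `Y_n = A_n S_n + b_n` and let `D` be the limit of `A_n A_{m_n}⁻¹` along a subsequence.

Suppose first that `m_n → ∞` along it. Then `U_n = A_n A_{m_n}⁻¹ Y_{m_n}` converges in distribution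
to `D_*μ`, and `Y_n - U_n` is an affine function of `X_{m_n + 1}, …, X_n`. By infinitesimality,
discarding the first `q` of these does not change the limit, and what remains is within `α(X; q)` of
being independent of `U_n`. By the covariance inequality `|cov(f, g)| ≤ 4 ‖f‖ ‖g‖ α`, every joint
limit `(Z, W)` of `(U_n, Y_n)` therefore has `Z` independent of `W - Z`: the law `μ` of `W` is the
convolution of `D_*μ` with the law of `W - Z`.

Otherwise `m_n` takes a constant value `M` infinitely often, so that `A_n → B = D A_M` along a
further subsequence, and `B X_j = 0` almost surely by infinitesimality. If some row `B i` were
nonzero, then `v_n = B i A_n⁻¹` would be a nonzero functional that is almost surely constant on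
`Y_n`; a limit of the rescaled `v_n` would be almost surely constant under the full measure `μ`.
Hence `B = 0` and `D = 0`, which lies in `D(μ)`.
-/

open ProbabilityTheory BoundedContinuousFunction

section Covariance

variable {Ω : Type*} {m m₁ m₂ mΩ : MeasurableSpace Ω} {P : Measure Ω} {f g h : Ω → ℝ} {a b c : ℝ}

lemma integral_abs_condExp_le_of_abs_setIntegral_le (hm : m ≤ mΩ) [SigmaFinite (P.trim hm)]
    (hh : Integrable h P) (hc : ∀ s, MeasurableSet[m] s → |∫ ω in s, h ω ∂P| ≤ c) :
    ∫ ω, |(P[h | m]) ω| ∂P ≤ 2 * c := by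
  have hs : MeasurableSet[m] {ω | 0 ≤ (P[h | m]) ω} :=
    stronglyMeasurable_condExp.measurable measurableSet_Ici
  set s := {ω | 0 ≤ (P[h | m]) ω}
  calc ∫ ω, |(P[h | m]) ω| ∂P
      = (∫ ω in s, |(P[h | m]) ω| ∂P) + ∫ ω in sᶜ, |(P[h | m]) ω| ∂P :=
        (integral_add_compl (hm _ hs) integrable_condExp.abs).symm
    _ = (∫ ω in s, (P[h | m]) ω ∂P) + ∫ ω in sᶜ, -(P[h | m]) ω ∂P := by
        congr 1
        · exact setIntegral_congr_fun (hm _ hs) fun ω hω => abs_of_nonneg hω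
        · exact setIntegral_congr_fun (hm _ hs.compl) fun ω hω => abs_of_neg (not_le.mp hω)
    _ = (∫ ω in s, h ω ∂P) + -∫ ω in sᶜ, h ω ∂P := by
        rw [integral_neg, setIntegral_condExp hm hh hs, setIntegral_condExp hm hh hs.compl]
    _ ≤ c + c := add_le_add (le_of_abs_le (hc s hs)) ((neg_le_abs _).trans (hc _ hs.compl))
    _ = 2 * c := (two_mul c).symm

lemma abs_integral_mul_le_of_abs_setIntegral_le [IsFiniteMeasure P] (hm : m ≤ mΩ)
    (hf : Measurable[m] f) (ha : 0 ≤ a) (hfa : ∀ ω, |f ω| ≤ a) (hh : Integrable h P)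
    (hc : ∀ s, MeasurableSet[m] s → |∫ ω in s, h ω ∂P| ≤ c) :
    |∫ ω, f ω * h ω ∂P| ≤ a * (2 * c) := by
  have hpull : P[f * h | m] =ᵐ[P] f * P[h | m] :=
    condExp_stronglyMeasurable_mul_of_bound hm hf.stronglyMeasurable hh a (ae_of_all _ hfa)
  calc |∫ ω, f ω * h ω ∂P| = |∫ ω, f ω * (P[h | m]) ω ∂P| :=
        congrArg abs ((integral_condExp hm).symm.trans (integral_congr_ae hpull))
    _ ≤ ∫ ω, a * |(P[h | m]) ω| ∂P := by
        rw [← Real.norm_eq_abs]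
        refine norm_integral_le_of_norm_le (integrable_condExp.abs.const_mul a)
          (ae_of_all _ fun ω => ?_)
        rw [Real.norm_eq_abs, abs_mul]
        exact mul_le_mul_of_nonneg_right (hfa ω) (abs_nonneg _)
    _ = a * ∫ ω, |(P[h | m]) ω| ∂P := integral_const_mul _ _
    _ ≤ a * (2 * c) := by gcongr; exact integral_abs_condExp_le_of_abs_setIntegral_le hm hh hc

lemma memLp_indicator_one [IsFiniteMeasure P] {p : ENNReal} {s : Set Ω} (hs : MeasurableSet s) :
    MemLp (s.indicator (1 : Ω → ℝ)) p P :=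
  (memLp_const (1 : ℝ)).indicator hs

variable [IsProbabilityMeasure P]

lemma covariance_eq_integral_mul_sub (hf : MemLp f 2 P) (hg : MemLp g 2 P) :
    cov[f, g; P] = ∫ ω, f ω * (g ω - P[g]) ∂P := by
  have hfg : Integrable (fun ω => f ω * g ω) P := hf.integrable_mul hg
  simp_rw [covariance_eq_sub hf hg, mul_sub]
  rw [integral_sub hfg ((hf.integrable one_le_two).mul_const _), integral_mul_const]
  rfl

lemma covariance_indicator_one {s t : Set Ω} (hs : MeasurableSet s) (ht : MeasurableSet t) :
    cov[s.indicator 1, t.indicator 1; P] = P.real (s ∩ t) - P.real s * P.real t := by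
  rw [covariance_eq_sub (memLp_indicator_one hs) (memLp_indicator_one ht),
    ← Set.inter_indicator_one, integral_indicator_one hs, integral_indicator_one ht,
    integral_indicator_one (hs.inter ht)]

lemma setIntegral_sub_integral_eq_covariance (hg : MemLp g 2 P) {s : Set Ω}
    (hs : MeasurableSet s) :
    ∫ ω in s, (g ω - P[g]) ∂P = cov[s.indicator 1, g; P] := by
  rw [covariance_eq_integral_mul_sub (memLp_indicator_one hs) hg, ← integral_indicator hs]
  congr with ω
  by_cases hω : ω ∈ s <;> simp [hω]

lemma abs_covariance_le_of_abs_covariance_indicator_le (hm : m ≤ mΩ) (hf : Measurable[m] f)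
    (hfa : ∀ ω, |f ω| ≤ a) (hg : MemLp g 2 P)
    (hc : ∀ s, MeasurableSet[m] s → |cov[s.indicator 1, g; P]| ≤ c) :
    |cov[f, g; P]| ≤ a * (2 * c) := by
  have ha : 0 ≤ a := (abs_nonneg _).trans (hfa (nonempty_of_isProbabilityMeasure P).some)
  have hfL : MemLp f 2 P := .of_bound (hf.mono hm le_rfl).aestronglyMeasurable a (ae_of_all _ hfa)
  rw [covariance_eq_integral_mul_sub hfL hg]
  refine abs_integral_mul_le_of_abs_setIntegral_le hm hf ha hfa
    ((hg.integrable one_le_two).sub (integrable_const _)) fun s hs => ?_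
  rw [setIntegral_sub_integral_eq_covariance hg (hm s hs)]
  exact hc s hs

lemma abs_measureReal_inter_sub_mul_le_one (s t : Set Ω) :
    |P.real (s ∩ t) - P.real s * P.real t| ≤ 1 :=
  abs_sub_le_of_nonneg_of_le measureReal_nonneg measureReal_le_one
    (mul_nonneg measureReal_nonneg measureReal_nonneg)
    (mul_le_one₀ measureReal_le_one measureReal_nonneg measureReal_le_one)

lemma alphaSig_le_one : alphaSig P m₁ m₂ ≤ 1 :=
  csSup_le ⟨_, ∅, ∅, @MeasurableSet.empty _ m₁, @MeasurableSet.empty _ m₂, rfl⟩ <| by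
    rintro _ ⟨s, t, -, -, rfl⟩
    exact abs_measureReal_inter_sub_mul_le_one s t

lemma abs_measureReal_inter_sub_mul_le_alphaSig {s t : Set Ω} (hs : MeasurableSet[m₁] s)
    (ht : MeasurableSet[m₂] t) :
    |P.real (s ∩ t) - P.real s * P.real t| ≤ alphaSig P m₁ m₂ := by
  refine le_csSup ⟨1, ?_⟩ ⟨s, t, hs, ht, rfl⟩
  rintro _ ⟨s, t, -, -, rfl⟩
  exact abs_measureReal_inter_sub_mul_le_one s t

lemma abs_covariance_le_alphaSig (hm₁ : m₁ ≤ mΩ) (hm₂ : m₂ ≤ mΩ) (hf : Measurable[m₁] f)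
    (hfa : ∀ ω, |f ω| ≤ a) (hg : Measurable[m₂] g) (hgb : ∀ ω, |g ω| ≤ b) :
    |cov[f, g; P]| ≤ 4 * a * b * alphaSig P m₁ m₂ := by
  have hgL : MemLp g 2 P := .of_bound (hg.mono hm₂ le_rfl).aestronglyMeasurable b (ae_of_all _ hgb)
  have hind : ∀ s, MeasurableSet[m₁] s →
      |cov[s.indicator 1, g; P]| ≤ b * (2 * alphaSig P m₁ m₂) := by
    intro s hs
    rw [covariance_comm]
    refine abs_covariance_le_of_abs_covariance_indicator_le hm₂ hg hgb
      (memLp_indicator_one (hm₁ s hs)) fun t ht => ?_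
    rw [covariance_comm, covariance_indicator_one (hm₁ s hs) (hm₂ t ht)]
    exact abs_measureReal_inter_sub_mul_le_alphaSig hs ht
  calc |cov[f, g; P]| ≤ a * (2 * (b * (2 * alphaSig P m₁ m₂))) :=
        abs_covariance_le_of_abs_covariance_indicator_le hm₁ hf hfa hgL hind
    _ = 4 * a * b * alphaSig P m₁ m₂ := by ring

end Covariance

section GeneratedSigmaAlgebra

variable {Ω ι E : Type*} [MeasurableSpace E] {X : ι → Ω → E} {s : Finset ι} {T : Set ι}

/-- The σ-algebra `σ(X k : k ∈ T)` generated by part of a family of random variables; reducible, so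
that it unifies with the suprema in `alphaMix`. -/
abbrev sigmaOf (X : ι → Ω → E) (T : Set ι) : MeasurableSpace Ω :=
  ⨆ k ∈ T, MeasurableSpace.comap (X k) inferInstance

lemma sigmaOf_le [mΩ : MeasurableSpace Ω] (hX : ∀ k, Measurable (X k)) : sigmaOf X T ≤ mΩ :=
  iSup₂_le fun k _ => (hX k).comap_le

lemma measurable_sigmaOf {k : ι} (hk : k ∈ T) : Measurable[sigmaOf X T] (X k) :=
  (comap_measurable (X k)).mono (le_iSup₂_of_le k hk le_rfl) le_rfl

lemma measurable_sigmaOf_sum [AddCommMonoid E] [MeasurableAdd₂ E] (hs : ↑s ⊆ T) :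
    Measurable[sigmaOf X T] fun ω => ∑ k ∈ s, X k ω :=
  Finset.measurable_sum s fun _ hk => measurable_sigmaOf (hs hk)

end GeneratedSigmaAlgebra

lemma alphaSig_le_alphaMix {Ω : Type*} [MeasurableSpace Ω] {P : Measure Ω} [IsProbabilityMeasure P]
    {d : ℕ} (X : ℕ → Ω → Fin d → ℝ) {j : ℕ} (hj : 1 ≤ j) (q : ℕ) :
    alphaSig P (sigmaOf X (Set.Icc 1 j)) (sigmaOf X (Set.Ici (j + q))) ≤ alphaMix P X q := by
  refine le_ciSup (f := fun i : {i : ℕ // 1 ≤ i} =>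
    alphaSig P (sigmaOf X (Set.Icc 1 (i : ℕ))) (sigmaOf X (Set.Ici ((i : ℕ) + q)))) ⟨1, ?_⟩ ⟨j, hj⟩
  rintro _ ⟨i, rfl⟩
  exact alphaSig_le_one

section ConvergenceInDistribution

variable {ι κ Ω Ω' E F G : Type*} [MeasurableSpace Ω] [MeasurableSpace Ω'] {P : Measure Ω}
  [IsProbabilityMeasure P] {Q : Measure Ω'} [IsProbabilityMeasure Q]

lemma WeakLim.tendstoInDistribution {d : ℕ} {Y : ℕ → Ω → Fin d → ℝ} {μ : Measure (Fin d → ℝ)}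
    [IsProbabilityMeasure μ] (h : WeakLim (fun n => P.map (Y n)) μ)
    (hY : ∀ n, AEMeasurable (Y n) P) :
    TendstoInDistribution Y atTop id (fun _ => P) μ where
  forall_aemeasurable := hY
  tendsto := by
    refine ProbabilityMeasure.tendsto_iff_forall_integral_tendsto.mpr fun f => ?_
    simpa using h f

lemma tendstoInDistribution_comp_tendsto [TopologicalSpace E] [MeasurableSpace E]
    [OpensMeasurableSpace E] {Y : ι → Ω → E} {Z : Ω' → E} {l : Filter ι} {l' : Filter κ}
    (h : TendstoInDistribution Y l Z (fun _ => P) Q) {φ : κ → ι} (hφ : Tendsto φ l' l) :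
    TendstoInDistribution (fun k => Y (φ k)) l' Z (fun _ => P) Q where
  forall_aemeasurable _ := h.forall_aemeasurable _
  aemeasurable_limit := h.aemeasurable_limit
  tendsto := h.tendsto.comp hφ

lemma tendsto_integral_of_tendstoInDistribution [TopologicalSpace E] [MeasurableSpace E]
    [OpensMeasurableSpace E] {Y : ι → Ω → E} {Z : Ω' → E} {l : Filter ι}
    (h : TendstoInDistribution Y l Z (fun _ => P) Q) (f : E →ᵇ ℝ) :
    Tendsto (fun k => ∫ ω, f (Y k ω) ∂P) l (𝓝 (∫ ω, f (Z ω) ∂Q)) := by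
  have hf := f.continuous.measurable.stronglyMeasurable
  have := ProbabilityMeasure.tendsto_iff_forall_integral_tendsto.mp h.tendsto f
  simp only [ProbabilityMeasure.coe_mk] at this
  rw [integral_map h.aemeasurable_limit hf.aestronglyMeasurable] at this
  exact this.congr fun k => integral_map (h.forall_aemeasurable k) hf.aestronglyMeasurable

lemma tendstoInDistribution_comp_prodMk_of_tendsto [SeminormedAddCommGroup E]
    [SecondCountableTopology E] [MeasurableSpace E] [BorelSpace E] [SeminormedAddCommGroup F]
    [SecondCountableTopology F] [MeasurableSpace F] [BorelSpace F] [TopologicalSpace G]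
    [MeasurableSpace G] [BorelSpace G] {Y : ι → Ω → E} {Z : Ω' → E} {l : Filter ι}
    [l.IsCountablyGenerated] (h : TendstoInDistribution Y l Z (fun _ => P) Q) {g : E × F → G}
    (hg : Continuous g) {y : ι → F} {c : F} (hy : Tendsto y l (𝓝 c)) :
    TendstoInDistribution (fun k ω => g (Y k ω, y k)) l (fun ω => g (Z ω, c)) (fun _ => P) Q := by
  refine h.continuous_comp_prodMk_of_tendstoInMeasure_const hg (tendstoInMeasure_iff_norm.mpr ?_)
    fun _ => aemeasurable_const
  intro ε hε
  refine tendsto_const_nhds.congr' ?_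
  filter_upwards [(tendsto_iff_norm_sub_tendsto_zero.mp hy).eventually_lt_const hε] with k hk
  simp [not_le.mpr hk]

lemma ae_eq_zero_of_tendstoInDistribution [TopologicalSpace E] [T1Space E] [MeasurableSpace E]
    [BorelSpace E] [HasOuterApproxClosed E] [Zero E] {l : Filter ι} [l.NeBot] {Y : ι → Ω → E}
    {Z : Ω' → E} (h : TendstoInDistribution Y l Z (fun _ => P) Q) (hY : ∀ k, Y k =ᵐ[P] 0) :
    Z =ᵐ[Q] 0 := by
  have hzero : TendstoInDistribution Y l (fun _ : Ω => (0 : E)) (fun _ => P) P :=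
    (tendstoInDistribution_const (aemeasurable_const (b := (0 : E)))).congr
      (fun k => (hY k).symm) .rfl
  have hmap := tendstoInDistribution_unique Y h hzero
  rw [Measure.map_const, measure_univ, one_smul] at hmap
  refine ae_of_ae_map h.aemeasurable_limit (p := fun x => x = 0) ?_
  rw [hmap]
  exact (ae_dirac_iff (measurableSet_singleton 0)).mpr rfl

section Tightness

variable [NormedAddCommGroup E] [SecondCountableTopology E] [MeasurableSpace E] [BorelSpace E]

lemma exists_subseq_tendstoInDistribution_of_isTightMeasureSet {Y : ℕ → Ω → E}
    (hY : ∀ k, AEMeasurable (Y k) P) (ht : IsTightMeasureSet (Set.range fun k => P.map (Y k))) :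
    ∃ (ρ : ProbabilityMeasure E) (ψ : ℕ → ℕ), StrictMono ψ ∧
      TendstoInDistribution (fun k => Y (ψ k)) atTop id (fun _ => P) (ρ : Measure E) := by
  let law : ℕ → ProbabilityMeasure E := fun k =>
    ⟨P.map (Y k), Measure.isProbabilityMeasure_map (hY k)⟩
  have hlaw : IsTightMeasureSet {((ρ : ProbabilityMeasure E) : Measure E) | ρ ∈ Set.range law} := by
    refine ht.subset ?_
    rintro _ ⟨_, ⟨k, rfl⟩, rfl⟩
    exact ⟨k, rfl⟩
  obtain ⟨ρ, -, ψ, hψ, hlim⟩ := (isCompact_closure_of_isTightMeasureSet hlaw).isSeqCompact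
    (x := law) fun k => subset_closure ⟨k, rfl⟩
  refine ⟨ρ, ψ, hψ, fun k => hY _, aemeasurable_id, ?_⟩
  simp only [Measure.map_id]
  exact hlim

variable [CompleteSpace E] [NormedAddCommGroup F] [SecondCountableTopology F] [CompleteSpace F]
  [MeasurableSpace F] [BorelSpace F]

lemma isTightMeasureSet_range_of_tendstoInDistribution {Y : ℕ → Ω → E} {Z : Ω' → E}
    (h : TendstoInDistribution Y atTop Z (fun _ => P) Q) :
    IsTightMeasureSet (Set.range fun k => P.map (Y k)) := by
  refine (isTightMeasureSet_of_isCompact_closure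
    (h.tendsto.isCompact_insert_range.closure_of_subset (Set.subset_insert _ _))).subset ?_
  rintro _ ⟨k, rfl⟩
  exact ⟨_, ⟨k, rfl⟩, rfl⟩

lemma exists_subseq_tendstoInDistribution_prodMk {Ω₁ Ω₂ : Type*} [MeasurableSpace Ω₁]
    [MeasurableSpace Ω₂] {Q₁ : Measure Ω₁} [IsProbabilityMeasure Q₁] {Q₂ : Measure Ω₂}
    [IsProbabilityMeasure Q₂] {U : ℕ → Ω → E} {V : ℕ → Ω → F} {Z₁ : Ω₁ → E} {Z₂ : Ω₂ → F}
    (hU : TendstoInDistribution U atTop Z₁ (fun _ => P) Q₁)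
    (hV : TendstoInDistribution V atTop Z₂ (fun _ => P) Q₂) :
    ∃ (ρ : ProbabilityMeasure (E × F)) (ψ : ℕ → ℕ), StrictMono ψ ∧
      TendstoInDistribution (fun k ω => (U (ψ k) ω, V (ψ k) ω)) atTop id (fun _ => P)
        (ρ : Measure (E × F)) := by
  have hU' := hU.forall_aemeasurable
  have hV' := hV.forall_aemeasurable
  refine exists_subseq_tendstoInDistribution_of_isTightMeasureSet
    (fun k => (hU' k).prodMk (hV' k)) (.prodMk ?_ ?_)
  · refine (isTightMeasureSet_range_of_tendstoInDistribution hU).subset ?_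
    rintro _ ⟨_, ⟨k, rfl⟩, rfl⟩
    exact ⟨k, (Measure.fst_map_prodMk₀ (hV' k)).symm⟩
  · refine (isTightMeasureSet_range_of_tendstoInDistribution hV).subset ?_
    rintro _ ⟨_, ⟨k, rfl⟩, rfl⟩
    exact ⟨k, (Measure.snd_map_prodMk₀ (hU' k)).symm⟩

end Tightness

section AsymptoticIndependence

variable [TopologicalSpace E] [MeasurableSpace E] [BorelSpace E] [TopologicalSpace F]
  [MeasurableSpace F] [BorelSpace F] [OpensMeasurableSpace (E × F)]
  {Z : Ω' → E} {W : Ω' → F} {l : Filter ι}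

lemma memLp_comp_of_aemeasurable {p : ENNReal} (f : E →ᵇ ℝ) (hZ : AEMeasurable Z Q) :
    MemLp (f ∘ Z) p Q :=
  .of_bound (f.continuous.measurable.comp_aemeasurable hZ).aestronglyMeasurable ‖f‖
    (ae_of_all _ fun _ => f.norm_coe_le_norm _)

lemma tendsto_covariance_of_tendstoInDistribution {U : ι → Ω → E} {V : ι → Ω → F}
    (h : TendstoInDistribution (fun k ω => (U k ω, V k ω)) l (fun ω => (Z ω, W ω)) (fun _ => P) Q)
    (f : E →ᵇ ℝ) (g : F →ᵇ ℝ) :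
    Tendsto (fun k => cov[f ∘ U k, g ∘ V k; P]) l (𝓝 cov[f ∘ Z, g ∘ W; Q]) := by
  let f' : E × F →ᵇ ℝ := f.compContinuous ⟨Prod.fst, continuous_fst⟩
  let g' : E × F →ᵇ ℝ := g.compContinuous ⟨Prod.snd, continuous_snd⟩
  have hU k : AEMeasurable (U k) P := (h.forall_aemeasurable k).fst
  have hV k : AEMeasurable (V k) P := (h.forall_aemeasurable k).snd
  rw [covariance_eq_sub (memLp_comp_of_aemeasurable f h.aemeasurable_limit.fst)
    (memLp_comp_of_aemeasurable g h.aemeasurable_limit.snd)]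
  have hlim := (tendsto_integral_of_tendstoInDistribution h (f' * g')).sub
    ((tendsto_integral_of_tendstoInDistribution h f').mul
      (tendsto_integral_of_tendstoInDistribution h g'))
  exact hlim.congr fun k => (covariance_eq_sub (memLp_comp_of_aemeasurable f (hU k))
    (memLp_comp_of_aemeasurable g (hV k))).symm

lemma abs_covariance_le_of_tendstoInDistribution [l.NeBot] {U : ι → Ω → E} {V : ι → Ω → F}
    (h : TendstoInDistribution (fun k ω => (U k ω, V k ω)) l (fun ω => (Z ω, W ω)) (fun _ => P) Q)
    {m₁ m₂ : ι → MeasurableSpace Ω} (hm₁ : ∀ k, m₁ k ≤ ‹_›) (hm₂ : ∀ k, m₂ k ≤ ‹_›)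
    (hU : ∀ k, Measurable[m₁ k] (U k)) (hV : ∀ k, Measurable[m₂ k] (V k)) {c : ℝ}
    (hc : ∀ k, alphaSig P (m₁ k) (m₂ k) ≤ c) (f : E →ᵇ ℝ) (g : F →ᵇ ℝ) :
    |cov[f ∘ Z, g ∘ W; Q]| ≤ 4 * ‖f‖ * ‖g‖ * c := by
  refine le_of_tendsto (tendsto_covariance_of_tendstoInDistribution h f g).abs
    (.of_forall fun k => ?_)
  calc |cov[f ∘ U k, g ∘ V k; P]| ≤ 4 * ‖f‖ * ‖g‖ * alphaSig P (m₁ k) (m₂ k) :=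
        abs_covariance_le_alphaSig (hm₁ k) (hm₂ k) (f.continuous.measurable.comp (hU k))
          (fun _ => f.norm_coe_le_norm _) (g.continuous.measurable.comp (hV k))
          (fun _ => g.norm_coe_le_norm _)
    _ ≤ 4 * ‖f‖ * ‖g‖ * c := by gcongr; exact hc k

lemma indepFun_of_tendstoInDistribution_of_alphaSig_le [HasOuterApproxClosed E]
    [HasOuterApproxClosed F] [l.NeBot] {U : ι → Ω → E} {V : κ → ι → Ω → F}
    (h : ∀ q, TendstoInDistribution (fun k ω => (U k ω, V q k ω)) l (fun ω => (Z ω, W ω))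
      (fun _ => P) Q)
    {m₁ : ι → MeasurableSpace Ω} {m₂ : κ → ι → MeasurableSpace Ω} (hm₁ : ∀ k, m₁ k ≤ ‹_›)
    (hm₂ : ∀ q k, m₂ q k ≤ ‹_›) (hU : ∀ k, Measurable[m₁ k] (U k))
    (hV : ∀ q k, Measurable[m₂ q k] (V q k)) {α : κ → ℝ} {l' : Filter κ} [l'.NeBot]
    (hα : Tendsto α l' (𝓝 0)) (hc : ∀ q k, alphaSig P (m₁ k) (m₂ q k) ≤ α q) :
    IndepFun Z W Q := by
  obtain ⟨q₀⟩ := l'.nonempty_of_neBot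
  have hZW := (h q₀).aemeasurable_limit
  refine indepFun_of_bcf hZW.fst hZW.snd fun f g => ?_
  have hbound : |cov[f ∘ Z, g ∘ W; Q]| ≤ 0 := by
    refine ge_of_tendsto (by simpa using hα.const_mul (4 * ‖f‖ * ‖g‖)) (.of_forall fun q => ?_)
    exact abs_covariance_le_of_tendstoInDistribution (h q) hm₁ (hm₂ q) hU (hV q) (hc q) f g
  rw [← sub_eq_zero, ← covariance_eq_sub (memLp_comp_of_aemeasurable f hZW.fst)
    (memLp_comp_of_aemeasurable g hZW.snd)]
  exact abs_nonpos_iff.mp hbound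

end AsymptoticIndependence

end ConvergenceInDistribution

section NormalizedSums

variable {Ω : Type*} {d : ℕ} {A : ℕ → Matrix (Fin d) (Fin d) ℝ} {b : ℕ → Fin d → ℝ}
  {X : ℕ → Ω → Fin d → ℝ} {m n : ℕ}

/-- The normalized partial sums `A_n S_n + b_n` of a sequence of random vectors. -/
def normalizedSum (A : ℕ → Matrix (Fin d) (Fin d) ℝ) (b : ℕ → Fin d → ℝ) (X : ℕ → Ω → Fin d → ℝ)
    (n : ℕ) (ω : Ω) : Fin d → ℝ :=
  A n *ᵥ partialSum X n ω + b n

/-- The indices of the first summands of `S_n - S_m`: those at distance less than `q` from `m`.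
Discarding them decouples the rest of `S_n - S_m` from `S_m`. -/
def gapBlock (m n q : ℕ) : Finset ℕ :=
  {j ∈ Finset.Ioc m n | j < m + q}

/-- The indices of the summands of `S_n - S_m` outside `gapBlock m n q`. -/
def farBlock (m n q : ℕ) : Finset ℕ :=
  {j ∈ Finset.Ioc m n | ¬ j < m + q}

/-- The part of `Y_n - A_n A_m⁻¹ Y_m`, for `Y = normalizedSum A b X`, that depends only on the
`X_j` with `j ≥ m + q`. -/
noncomputable def farRemainder (A : ℕ → Matrix (Fin d) (Fin d) ℝ) (b : ℕ → Fin d → ℝ)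
    (X : ℕ → Ω → Fin d → ℝ) (m n q : ℕ) (ω : Ω) : Fin d → ℝ :=
  A n *ᵥ ∑ j ∈ farBlock m n q, X j ω + (b n - (A n * (A m)⁻¹) *ᵥ b m)

lemma gapBlock_subset_Icc (m n q : ℕ) : gapBlock m n q ⊆ Finset.Icc 1 n := by
  intro j hj
  simp only [gapBlock, Finset.mem_filter, Finset.mem_Ioc] at hj
  exact Finset.mem_Icc.mpr ⟨by lia, hj.1.2⟩

lemma card_gapBlock_le (m n q : ℕ) : (gapBlock m n q).card ≤ q := by
  have hsub : gapBlock m n q ⊆ Finset.Ico m (m + q) := by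
    intro j hj
    simp only [gapBlock, Finset.mem_filter, Finset.mem_Ioc] at hj
    exact Finset.mem_Ico.mpr ⟨hj.1.1.le, hj.2⟩
  simpa using Finset.card_le_card hsub

lemma partialSum_eq_add_sum_gapBlock_add_sum_farBlock (hmn : m ≤ n) (q : ℕ) (ω : Ω) :
    partialSum X n ω =
      partialSum X m ω + (∑ j ∈ gapBlock m n q, X j ω + ∑ j ∈ farBlock m n q, X j ω) := by
  have hIcc : ∀ i, Finset.Icc 1 i = Finset.Ioc 0 i := Finset.Icc_add_one_left_eq_Ioc 0
  rw [gapBlock, farBlock, Finset.sum_filter_add_sum_filter_not, partialSum, partialSum, hIcc, hIcc,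
    Finset.sum_Ioc_consecutive _ m.zero_le hmn]

lemma normalizedSum_eq_add (hA : IsUnit (A m)) (hmn : m ≤ n) (q : ℕ) (ω : Ω) :
    normalizedSum A b X n ω = (A n * (A m)⁻¹) *ᵥ normalizedSum A b X m ω +
      ∑ j ∈ gapBlock m n q, A n *ᵥ X j ω + farRemainder A b X m n q ω := by
  have hdet := (Matrix.isUnit_iff_isUnit_det _).mp hA
  simp only [normalizedSum, farRemainder, partialSum_eq_add_sum_gapBlock_add_sum_farBlock hmn q ω,
    mulVec_add, mulVec_mulVec, nonsing_inv_mul_cancel_right _ _ hdet, ← mulVec_sum]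
  abel

lemma measurable_normalizedSum (n : ℕ) :
    Measurable[sigmaOf X (Set.Icc 1 n)] (normalizedSum A b X n) := by
  have hcont : Continuous fun x => A n *ᵥ x + b n := by fun_prop
  exact hcont.measurable.comp (measurable_sigmaOf_sum (Finset.coe_Icc 1 n).subset)

lemma measurable_farRemainder (m n q : ℕ) :
    Measurable[sigmaOf X (Set.Ici (m + q))] (farRemainder A b X m n q) := by
  have hcont : Continuous fun x => A n *ᵥ x + (b n - (A n * (A m)⁻¹) *ᵥ b m) := by fun_prop
  exact hcont.measurable.comp
    (measurable_sigmaOf_sum fun j hj => not_lt.mp (Finset.mem_filter.mp hj).2)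

end NormalizedSums

section Infinitesimal

variable {Ω κ : Type*} [MeasurableSpace Ω] {P : Measure Ω} [IsFiniteMeasure P] {l : Filter κ}

lemma tendstoInMeasure_sum_of_card_le {ι E : Type*} [SeminormedAddCommGroup E]
    {f : κ → ι → Ω → E} {T : κ → Finset ι} {q : ℕ} (hT : ∀ k, (T k).card ≤ q)
    (hf : ∀ ε > 0, ∀ δ > 0, ∀ᶠ k in l, ∀ i ∈ T k, P.real {ω | ε ≤ ‖f k i ω‖} < δ) :
    TendstoInMeasure P (fun k ω => ∑ i ∈ T k, f k i ω) l 0 := by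
  have hshare : ∀ k, ∀ ε > (0 : ℝ), (T k).card • (ε / (q + 1)) < ε := by
    intro k ε hε
    have hcard : ((T k).card : ℝ) < q + 1 := by exact_mod_cast Nat.lt_succ_of_le (hT k)
    rw [nsmul_eq_mul, mul_div_left_comm]
    exact mul_lt_of_lt_one_right hε ((div_lt_one (by positivity)).mpr hcard)
  refine tendstoInMeasure_iff_measureReal_norm.mpr fun ε hε => tendsto_order.mpr
    ⟨fun _ ha => .of_forall fun _ => ha.trans_le measureReal_nonneg, fun δ hδ => ?_⟩
  filter_upwards [hf (ε / (q + 1)) (by positivity) (δ / (q + 1)) (by positivity)] with k hk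
  have hsub : {ω | ε ≤ ‖∑ i ∈ T k, f k i ω - (0 : Ω → E) ω‖} ⊆
      ⋃ i ∈ T k, {ω | ε / (q + 1) ≤ ‖f k i ω‖} := by
    intro ω hω
    by_contra hsmall
    simp only [Set.mem_iUnion, Set.mem_ofPred_eq, not_exists, not_le] at hsmall
    refine (hshare k ε hε).not_ge (le_trans (by simpa using hω) ?_)
    exact norm_sum_le_of_le _ (fun i hi => (hsmall i hi).le) |>.trans_eq (Finset.sum_const _)
  calc _ ≤ P.real (⋃ i ∈ T k, {ω | ε / (q + 1) ≤ ‖f k i ω‖}) :=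
        measureReal_mono hsub (measure_ne_top _ _)
    _ ≤ ∑ i ∈ T k, P.real {ω | ε / (q + 1) ≤ ‖f k i ω‖} := measureReal_biUnion_finset_le _ _
    _ ≤ (T k).card • (δ / (q + 1)) := Finset.sum_le_card_nsmul _ _ _ fun i hi => (hk i hi).le
    _ < δ := hshare k δ hδ

variable {d : ℕ} {A : ℕ → Matrix (Fin d) (Fin d) ℝ} {X : ℕ → Ω → Fin d → ℝ}

lemma Infinitesimal.tendstoInMeasure_sum (hinf : Infinitesimal P A X) {n : κ → ℕ}
    (hn : Tendsto n l atTop) {T : κ → Finset ℕ} (hT : ∀ᶠ k in l, T k ⊆ Finset.Icc 1 (n k)) {q : ℕ}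
    (hq : ∀ k, (T k).card ≤ q) :
    TendstoInMeasure P (fun k ω => ∑ j ∈ T k, A (n k) *ᵥ X j ω) l 0 := by
  refine tendstoInMeasure_sum_of_card_le hq fun ε hε δ hδ => ?_
  obtain ⟨N, hN⟩ := hinf ε hε δ hδ
  filter_upwards [hn.eventually_ge_atTop N, hT] with k hk hTk j hj
  obtain ⟨hj₁, hj₂⟩ := Finset.mem_Icc.mp (hTk hj)
  exact hN (n k) hk j hj₁ hj₂

lemma Infinitesimal.ae_mulVec_eq_zero (hinf : Infinitesimal P A X) (hX : ∀ j, Measurable (X j))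
    {n : ℕ → ℕ} (hn : Tendsto n atTop atTop) {B : Matrix (Fin d) (Fin d) ℝ}
    (hB : Tendsto (fun k => A (n k)) atTop (𝓝 B)) {j : ℕ} (hj : 1 ≤ j) :
    ∀ᵐ ω ∂P, B *ᵥ X j ω = 0 := by
  have hlim : TendstoInMeasure P (fun k ω => A (n k) *ᵥ X j ω) atTop fun ω => B *ᵥ X j ω := by
    refine tendstoInMeasure_of_tendsto_ae (fun k => ?_) (ae_of_all _ fun ω => ?_)
    · have hcont : Continuous fun x => A (n k) *ᵥ x := by fun_prop
      exact (hcont.measurable.comp (hX j)).aestronglyMeasurable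
    · have hcont : Continuous fun M : Matrix (Fin d) (Fin d) ℝ => M *ᵥ X j ω := by fun_prop
      exact (hcont.tendsto B).comp hB
  have hzero : TendstoInMeasure P (fun k ω => A (n k) *ᵥ X j ω) atTop 0 := by
    have hsingle : ∀ᶠ k in atTop, {j} ⊆ Finset.Icc 1 (n k) := by
      filter_upwards [hn.eventually_ge_atTop j] with k hk
      exact Finset.singleton_subset_iff.mpr (Finset.mem_Icc.mpr ⟨hj, hk⟩)
    simpa using hinf.tendstoInMeasure_sum hn hsingle fun _ => (Finset.card_singleton j).le
  exact tendstoInMeasure_ae_unique hlim hzero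

lemma Infinitesimal.ae_mulVec_partialSum_eq_zero (hinf : Infinitesimal P A X)
    (hX : ∀ j, Measurable (X j)) {n : ℕ → ℕ} (hn : Tendsto n atTop atTop)
    {B : Matrix (Fin d) (Fin d) ℝ} (hB : Tendsto (fun k => A (n k)) atTop (𝓝 B)) (i : ℕ) :
    ∀ᵐ ω ∂P, B *ᵥ partialSum X i ω = 0 := by
  have hterms : ∀ᵐ ω ∂P, ∀ j ∈ Finset.Icc 1 i, B *ᵥ X j ω = 0 :=
    (ae_ball_iff (Finset.countable_toSet _)).mpr fun j hj =>
      hinf.ae_mulVec_eq_zero hX hn hB (Finset.mem_Icc.mp hj).1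
  filter_upwards [hterms] with ω hω
  rw [partialSum, mulVec_sum]
  exact Finset.sum_eq_zero hω

end Infinitesimal

section Hyperplanes

lemma exists_ae_dotProduct_eq_of_tendstoInDistribution {ι Ω Ω' : Type*} [Fintype ι]
    [MeasurableSpace Ω] [MeasurableSpace Ω'] {P : Measure Ω} [IsProbabilityMeasure P]
    {Q : Measure Ω'} [IsProbabilityMeasure Q] {Y : ℕ → Ω → ι → ℝ} {Z : Ω' → ι → ℝ}
    (h : TendstoInDistribution Y atTop Z (fun _ => P) Q) {v : ℕ → ι → ℝ} (hv : ∀ k, v k ≠ 0)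
    {c : ℕ → ℝ} (hvc : ∀ k, ∀ᵐ ω ∂P, v k ⬝ᵥ Y k ω = c k) :
    ∃ u ≠ 0, ∃ a, ∀ᵐ ω ∂Q, u ⬝ᵥ Z ω = a := by
  -- Normalizing the pair `(v k, c k)`, and not `v k` alone, keeps the constants bounded as well.
  let r : ℕ → ℝ := fun k => ‖(v k, c k)‖⁻¹
  have hsphere : ∀ k, r k • (v k, c k) ∈ Metric.sphere (0 : (ι → ℝ) × ℝ) 1 := fun k => by
    have hne : (v k, c k) ≠ 0 := fun h => hv k (congrArg Prod.fst h)
    exact mem_sphere_zero_iff_norm.mpr (norm_smul_inv_norm (𝕜 := ℝ) hne)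
  obtain ⟨⟨u, a⟩, hua, ψ, hψ, hlim⟩ := (isCompact_sphere _ _).isSeqCompact hsphere
  have hg : Continuous fun p : (ι → ℝ) × (ι → ℝ) × ℝ => p.2.1 ⬝ᵥ p.1 - p.2.2 :=
    (continuous_snd.fst.dotProduct continuous_fst).sub continuous_snd.snd
  have hzero : (fun ω => u ⬝ᵥ Z ω - a) =ᵐ[Q] 0 := by
    refine ae_eq_zero_of_tendstoInDistribution (tendstoInDistribution_comp_prodMk_of_tendsto
      (tendstoInDistribution_comp_tendsto h hψ.tendsto_atTop) hg hlim) fun k => ?_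
    filter_upwards [hvc (ψ k)] with ω hω
    simp [smul_dotProduct, hω]
  have hae : ∀ᵐ ω ∂Q, u ⬝ᵥ Z ω = a := hzero.mono fun ω hω => sub_eq_zero.mp hω
  refine ⟨u, ?_, a, hae⟩
  rintro rfl
  obtain ⟨ω, hω⟩ := hae.exists
  rw [zero_dotProduct] at hω
  simp [← hω] at hua

variable {d : ℕ} {μ : Measure (Fin d → ℝ)} [IsProbabilityMeasure μ]

lemma IsFull.not_ae_dotProduct_eq (hμ : IsFull μ) {u : Fin d → ℝ} (hu : u ≠ 0) (a : ℝ) :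
    ¬ ∀ᵐ x ∂μ, u ⬝ᵥ x = a := by
  intro ha
  have huu : u ⬝ᵥ u ≠ 0 := dotProduct_self_eq_zero.not.mpr hu
  let L : Submodule ℝ (Fin d → ℝ) := LinearMap.ker (dotProductBilin ℝ ℝ u)
  have hL : ∀ x, x ∈ L ↔ u ⬝ᵥ x = 0 := fun _ => LinearMap.mem_ker
  have hLtop : L ≠ ⊤ := fun h => huu ((hL u).mp (h ▸ Submodule.mem_top))
  refine (hμ ((a / (u ⬝ᵥ u)) • u) L hLtop).ne
    ((measure_congr (eventuallyEq_univ.mpr ?_)).trans measure_univ)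
  filter_upwards [ha] with x hx
  exact (hL _).mpr (by simp [dotProduct_sub, dotProduct_smul, hx, huu])

lemma eq_zero_of_tendsto_norming {Ω : Type*} [MeasurableSpace Ω] {P : Measure Ω}
    [IsProbabilityMeasure P] {X : ℕ → Ω → Fin d → ℝ} (hX : ∀ j, Measurable (X j))
    {A : ℕ → Matrix (Fin d) (Fin d) ℝ} (hA : ∀ n, IsUnit (A n)) {b : ℕ → Fin d → ℝ}
    (hμ : IsFull μ) (hinf : Infinitesimal P A X)
    (hY : TendstoInDistribution (normalizedSum A b X) atTop id (fun _ => P) μ)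
    {n : ℕ → ℕ} (hn : Tendsto n atTop atTop) {B : Matrix (Fin d) (Fin d) ℝ}
    (hB : Tendsto (fun k => A (n k)) atTop (𝓝 B)) : B = 0 := by
  by_contra hB₀
  obtain ⟨i, hi⟩ : ∃ i, B i ≠ 0 := Function.ne_iff.mp hB₀
  let v : ℕ → Fin d → ℝ := fun k => B i ᵥ* (A (n k))⁻¹
  have hvA : ∀ k, v k ᵥ* A (n k) = B i := fun k => by
    rw [vecMul_vecMul, nonsing_inv_mul _ ((Matrix.isUnit_iff_isUnit_det _).mp (hA _)), vecMul_one]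
  have hv : ∀ k, v k ≠ 0 := fun k h => hi (by rw [← hvA k, h, zero_vecMul])
  have hvY : ∀ k, ∀ᵐ ω ∂P, v k ⬝ᵥ normalizedSum A b X (n k) ω = v k ⬝ᵥ b (n k) := fun k => by
    filter_upwards [hinf.ae_mulVec_partialSum_eq_zero hX hn hB (n k)] with ω hω
    have hrow : B i ⬝ᵥ partialSum X (n k) ω = 0 := congrFun hω i
    rw [normalizedSum, dotProduct_add, dotProduct_mulVec, hvA, hrow, zero_add]
  obtain ⟨u, hu, a, ha⟩ := exists_ae_dotProduct_eq_of_tendstoInDistribution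
    (tendstoInDistribution_comp_tendsto hY hn) hv hvY
  exact hμ.not_ae_dotProduct_eq hu a ha

end Hyperplanes

section UrbanikD

variable {Ω Ω' : Type*} [MeasurableSpace Ω] {P : Measure Ω} [MeasurableSpace Ω'] {Q : Measure Ω'}
  [IsProbabilityMeasure P] [IsProbabilityMeasure Q] {d : ℕ} {X : ℕ → Ω → Fin d → ℝ}
  {A : ℕ → Matrix (Fin d) (Fin d) ℝ} {b : ℕ → Fin d → ℝ} {μ : Measure (Fin d → ℝ)}
  {m n : ℕ → ℕ} {D : Matrix (Fin d) (Fin d) ℝ}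

lemma mem_urbanikD_of_indepFun {Z W : Ω' → Fin d → ℝ} (hZ : AEMeasurable Z Q)
    (hW : AEMeasurable W Q) (hZW : IndepFun Z (W - Z) Q) (hmapZ : Q.map Z = μ.map D.mulVec)
    (hmapW : Q.map W = μ) : D ∈ UrbanikD μ := by
  refine ⟨Q.map (W - Z), Measure.isProbabilityMeasure_map (hW.sub hZ), ?_⟩
  change μ = (μ.map D.mulVec) ∗ Q.map (W - Z)
  rw [← hmapZ, ← hZW.map_add_eq_map_conv_map₀ hZ (hW.sub hZ), add_sub_cancel, hmapW]

lemma zero_mem_urbanikD (μ : Measure (Fin d → ℝ)) [IsProbabilityMeasure μ] :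
    (0 : Matrix (Fin d) (Fin d) ℝ) ∈ UrbanikD μ := by
  refine mem_urbanikD_of_indepFun (Q := μ) (Z := 0) (W := id) aemeasurable_const aemeasurable_id
    (indepFun_const_left 0 _) ?_ Measure.map_id
  exact congrArg μ.map (funext fun x => (zero_mulVec x).symm)

lemma tendstoInDistribution_farRemainder (hX : ∀ j, Measurable (X j)) (hA : ∀ n, IsUnit (A n))
    (hinf : Infinitesimal P A X) (hn : Tendsto n atTop atTop) (hmn : ∀ k, m k ≤ n k)
    {Z W : Ω' → Fin d → ℝ}
    (h : TendstoInDistribution (fun k ω => ((A (n k) * (A (m k))⁻¹) *ᵥ normalizedSum A b X (m k) ω,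
      normalizedSum A b X (n k) ω)) atTop (fun ω => (Z ω, W ω)) (fun _ => P) Q) (q : ℕ) :
    TendstoInDistribution (fun k ω => ((A (n k) * (A (m k))⁻¹) *ᵥ normalizedSum A b X (m k) ω,
      farRemainder A b X (m k) (n k) q ω)) atTop (fun ω => (Z ω, (W - Z) ω)) (fun _ => P) Q := by
  have hgap : TendstoInMeasure P
      (fun k ω => ∑ j ∈ gapBlock (m k) (n k) q, A (n k) *ᵥ X j ω) atTop fun _ => 0 :=
    hinf.tendstoInMeasure_sum hn (.of_forall fun k => gapBlock_subset_Icc _ _ q)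
      fun k => card_gapBlock_le _ _ q
  have hgap_meas (k : ℕ) :
      AEMeasurable (fun ω => ∑ j ∈ gapBlock (m k) (n k) q, A (n k) *ᵥ X j ω) P := by
    have hcont : Continuous fun x => A (n k) *ᵥ x := by fun_prop
    exact (Finset.measurable_sum _ fun j _ => hcont.measurable.comp (hX j)).aemeasurable
  have hg : Continuous fun p : ((Fin d → ℝ) × (Fin d → ℝ)) × (Fin d → ℝ) =>
      (p.1.1, p.1.2 - p.1.1 - p.2) := by fun_prop
  have hlim := TendstoInDistribution.continuous_comp_prodMk_of_tendstoInMeasure_const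
    hg h hgap hgap_meas
  refine hlim.congr (fun k => ae_of_all _ fun ω => ?_) (ae_of_all _ fun ω => by simp)
  refine Prod.ext rfl ?_
  simp only [normalizedSum_eq_add (hA _) (hmn k) q]
  abel

lemma indepFun_sub_of_tendstoInDistribution (hX : ∀ j, Measurable (X j)) (hA : ∀ n, IsUnit (A n))
    (hmix : StronglyMixing P X) (hinf : Infinitesimal P A X) (hn : Tendsto n atTop atTop)
    (hm : ∀ k, 1 ≤ m k ∧ m k ≤ n k) {Z W : Ω' → Fin d → ℝ}
    (h : TendstoInDistribution (fun k ω => ((A (n k) * (A (m k))⁻¹) *ᵥ normalizedSum A b X (m k) ω,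
      normalizedSum A b X (n k) ω)) atTop (fun ω => (Z ω, W ω)) (fun _ => P) Q) :
    IndepFun Z (W - Z) Q := by
  refine indepFun_of_tendstoInDistribution_of_alphaSig_le
    (tendstoInDistribution_farRemainder hX hA hinf hn (fun k => (hm k).2) h)
    (fun _ => sigmaOf_le hX) (fun _ _ => sigmaOf_le hX) (fun k => ?_)
    (fun q k => measurable_farRemainder _ _ q) hmix fun q k => alphaSig_le_alphaMix X (hm k).1 q
  have hcont : Continuous fun x => (A (n k) * (A (m k))⁻¹) *ᵥ x := by fun_prop
  exact hcont.measurable.comp (measurable_normalizedSum _)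

variable [IsProbabilityMeasure μ]

lemma mem_urbanikD_of_tendsto_atTop (hX : ∀ j, Measurable (X j)) (hA : ∀ n, IsUnit (A n))
    (hmix : StronglyMixing P X) (hinf : Infinitesimal P A X)
    (hY : TendstoInDistribution (normalizedSum A b X) atTop id (fun _ => P) μ)
    (hm : ∀ k, 1 ≤ m k ∧ m k ≤ n k) (hm_top : Tendsto m atTop atTop)
    (hD : Tendsto (fun k => A (n k) * (A (m k))⁻¹) atTop (𝓝 D)) : D ∈ UrbanikD μ := by
  have hn : Tendsto n atTop atTop := tendsto_atTop_mono (fun k => (hm k).2) hm_top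
  have hYn := tendstoInDistribution_comp_tendsto hY hn
  -- Matrices carry no global norm, so Slutsky's lemma is applied to the underlying arrays.
  have hmulVec : Continuous fun p : (Fin d → ℝ) × (Fin d → Fin d → ℝ) => Matrix.of p.2 *ᵥ p.1 :=
    .matrix_mulVec continuous_snd continuous_fst
  have hU : TendstoInDistribution
      (fun k ω => (A (n k) * (A (m k))⁻¹) *ᵥ normalizedSum A b X (m k) ω) atTop D.mulVec
      (fun _ => P) μ :=
    tendstoInDistribution_comp_prodMk_of_tendsto (tendstoInDistribution_comp_tendsto hY hm_top)
      hmulVec hD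
  obtain ⟨ρ, ψ, hψ, hjoint⟩ := exists_subseq_tendstoInDistribution_prodMk hU hYn
  have hψ_top := hψ.tendsto_atTop
  have hindep := indepFun_sub_of_tendstoInDistribution hX hA hmix hinf (hn.comp hψ_top)
    (fun k => hm (ψ k)) hjoint
  exact mem_urbanikD_of_indepFun measurable_fst.aemeasurable measurable_snd.aemeasurable hindep
    (tendstoInDistribution_unique _ (hjoint.continuous_comp continuous_fst)
      (tendstoInDistribution_comp_tendsto hU hψ_top))
    ((tendstoInDistribution_unique _ (hjoint.continuous_comp continuous_snd)
      (tendstoInDistribution_comp_tendsto hYn hψ_top)).trans Measure.map_id)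

lemma mem_urbanikD_of_tendsto_mul_inv_const (hX : ∀ j, Measurable (X j)) (hA : ∀ n, IsUnit (A n))
    (hμ : IsFull μ) (hinf : Infinitesimal P A X)
    (hY : TendstoInDistribution (normalizedSum A b X) atTop id (fun _ => P) μ)
    (hn : Tendsto n atTop atTop) {M : ℕ}
    (hD : Tendsto (fun k => A (n k) * (A M)⁻¹) atTop (𝓝 D)) : D ∈ UrbanikD μ := by
  have hdet := (Matrix.isUnit_iff_isUnit_det _).mp (hA M)
  have hlim : Tendsto (fun k => A (n k)) atTop (𝓝 (D * A M)) :=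
    (hD.mul_const (A M)).congr fun k => nonsing_inv_mul_cancel_right _ _ hdet
  have hzero : D = 0 := by
    rw [← mul_nonsing_inv_cancel_right (A M) D hdet,
      eq_zero_of_tendsto_norming hX hA hμ hinf hY hn hlim, Matrix.zero_mul]
  exact hzero ▸ zero_mem_urbanikD μ

end UrbanikD

lemma exists_subseq_eq_of_not_tendsto_atTop {m : ℕ → ℕ} (hm : ¬ Tendsto m atTop atTop) :
    ∃ (M : ℕ) (ψ : ℕ → ℕ), StrictMono ψ ∧ ∀ k, m (ψ k) = M := by
  simp only [tendsto_atTop, not_forall, not_eventually, not_le] at hm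
  obtain ⟨R, hR⟩ := hm
  have hR' : ∃ᶠ k in atTop, ∃ M ∈ Finset.range R, m k = M :=
    hR.mono fun k hk => ⟨m k, Finset.mem_range.mpr hk, rfl⟩
  obtain ⟨M, -, hM⟩ := (frequently_exists_finset _).mp hR'
  exact ⟨M, extraction_of_frequently_atTop hM⟩

/-- **Proposition 2 (second part).** Under strong mixing, infinitesimality and weak
convergence to a full law, with all `A_n` invertible, if `1 ≤ m_n ≤ n` then every limit
point of the sequence `(A_n A_{m_n}⁻¹)` belongs to `D(μ)`. -/
theorem limit_points_mem_urbanikD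
    {d : ℕ} {Ω : Type*} [MeasurableSpace Ω] (P : Measure Ω) [IsProbabilityMeasure P]
    (X : ℕ → Ω → (Fin d → ℝ)) (hXmeas : ∀ j, Measurable (X j))
    (A : ℕ → Matrix (Fin d) (Fin d) ℝ) (hAinv : ∀ n, IsUnit (A n)) (b : ℕ → Fin d → ℝ)
    (μ : Measure (Fin d → ℝ)) [IsProbabilityMeasure μ] (hfull : IsFull μ)
    (hmix : StronglyMixing P X)
    (hinf : Infinitesimal P A X)
    (hconv : WeakLim (fun n => P.map (fun ω => (A n).mulVec (partialSum X n ω) + b n)) μ)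
    (m : ℕ → ℕ) (hm : ∀ n, 1 ≤ n → (1 ≤ m n ∧ m n ≤ n)) :
    ∀ D : Matrix (Fin d) (Fin d) ℝ,
      (∃ φ : ℕ → ℕ, StrictMono φ ∧
        Tendsto (fun k => A (φ k) * (A (m (φ k)))⁻¹) atTop (𝓝 D)) →
      D ∈ UrbanikD μ := by
  rintro D ⟨φ, hφ, hD⟩
  have hY : TendstoInDistribution (normalizedSum A b X) atTop id (fun _ => P) μ :=
    WeakLim.tendstoInDistribution hconv fun n =>
      ((measurable_normalizedSum n).mono (sigmaOf_le hXmeas) le_rfl).aemeasurable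
  -- The shift by one discards `φ 0`, which may be `0`.
  by_cases hm_top : Tendsto (fun k => m (φ (k + 1))) atTop atTop
  · exact mem_urbanikD_of_tendsto_atTop hXmeas hAinv hmix hinf hY
      (fun k => hm _ ((Nat.le_add_left 1 k).trans hφ.le_apply)) hm_top
      (hD.comp (tendsto_add_atTop_nat 1))
  · obtain ⟨M, ψ, hψ, hM⟩ := exists_subseq_eq_of_not_tendsto_atTop hm_top
    have hψ' : Tendsto (fun k => ψ k + 1) atTop atTop :=
      (tendsto_add_atTop_nat 1).comp hψ.tendsto_atTop
    refine mem_urbanikD_of_tendsto_mul_inv_const hXmeas hAinv hfull hinf hY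
      (hφ.tendsto_atTop.comp hψ') (M := M) ?_
    exact (hD.comp hψ').congr fun k => by simp only [Function.comp_apply, hM]
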